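/- Let C be a nodal curve with components C_1,…,C_p and marked smooth point σ(0). Fix (i,j,k) with i ≠ j and C_i ∩ C_j ≠ ∅, and fix s ∈ {2,3}. Then the symmetric difference T^s_{i,k|j,k} := (T^s_{i,k} ∪ T^s_{j,k}) ∖ (T^s_{i,k} ∩ T^s_{j,k}) is totally ordered by inclusion; moreover, writing it as {W_0 ⊊ W_1 ⊊ … ⊊ W_m}, each consecutive pair (W_{t−1}, W_t) is terminal, i.e., Term_{W_{t−1}} ∩ Term_{W_t} ≠ ∅. -/

import Mathlib

open Finset

/-- A combinatorial model of a nodal curve: `V` is the set of irreducible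
components, `N` the set of nodes, `ends e` the (one or two) components through
the node `e`, `gen v` the geometric genus of the component `v`, and `base` the
component containing the marked smooth point `σ(0)`. -/
structure NodalGraph where
  V : Type
  N : Type
  [fV : Fintype V]
  [dV : DecidableEq V]
  [fN : Fintype N]
  [dN : DecidableEq N]
  ends : N → V × V
  gen : V → ℕ
  base : V

attribute [instance] NodalGraph.fV NodalGraph.dV NodalGraph.fN NodalGraph.dN

namespace NodalGraph

variable (G : NodalGraph)

/-- Two components are adjacent if some node lies on both. -/
def Adj (a b : G.V) : Prop := ∃ e, G.ends e = (a, b) ∨ G.ends e = (b, a)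

/-- The set of terminal points of a subcurve `Z`, i.e. the nodes in `Z ∩ Zᶜ`. -/
def Term (Z : Finset G.V) : Finset G.N :=
  univ.filter (fun e =>
    ((G.ends e).1 ∈ Z ∧ (G.ends e).2 ∉ Z) ∨ ((G.ends e).1 ∉ Z ∧ (G.ends e).2 ∈ Z))

/-- `k_Z`, the number of terminal points of `Z`. -/
def k (Z : Finset G.V) : ℕ := (G.Term Z).card

/-- A (nonempty) subcurve is connected. -/
def ConnSub (Z : Finset G.V) : Prop :=
  Z.Nonempty ∧ ∀ u ∈ Z, ∀ v ∈ Z,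
    Relation.ReflTransGen (fun a b => a ∈ Z ∧ b ∈ Z ∧ G.Adj a b) u v

/-- The whole curve is connected. -/
def Connected : Prop := G.ConnSub univ

/-- A tail: a proper subcurve `Z` with both `Z` and `Zᶜ` connected. -/
def IsTail (Z : Finset G.V) : Prop := Z ≠ univ ∧ G.ConnSub Z ∧ G.ConnSub Zᶜ

/-- A `m`-tail: a tail with `k_Z = m`. -/
def IsKTail (Z : Finset G.V) (m : ℕ) : Prop := G.IsTail Z ∧ G.k Z = m

/-- The node `e` lies on the component `v`. -/
def onComp (e : G.N) (v : G.V) : Prop := (G.ends e).1 = v ∨ (G.ends e).2 = v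

/-- The node `e`, as a point of the curve, lies on the subcurve `Z`. -/
def nodeOn (e : G.N) (Z : Finset G.V) : Prop := (G.ends e).1 ∈ Z ∨ (G.ends e).2 ∈ Z

/-- The subcurve `Z` crosses the node `e`: both branches of `e` lie in `Z`. -/
def crosses (Z : Finset G.V) (e : G.N) : Prop := (G.ends e).1 ∈ Z ∧ (G.ends e).2 ∈ Z

/-- `Z ≺ Z'`: strict inclusion with disjoint terminal points. -/
def prec (Z Z' : Finset G.V) : Prop := Z ⊂ Z' ∧ G.Term Z ∩ G.Term Z' = ∅

/-- The pair `(Z, Z')` is free: disjoint terminal points. -/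
def free (Z Z' : Finset G.V) : Prop := G.Term Z ∩ G.Term Z' = ∅

/-- The pair `(Z, Z')` is perfect. -/
def perfect (Z Z' : Finset G.V) : Prop := Z ⊆ Z' ∨ Z' ⊆ Z ∨ Zᶜ ⊆ Z' ∨ Z' ⊆ Zᶜ

/-- `T¹_γ`: the nested set of 1-tails containing `C_γ` and avoiding `σ(0)`. -/
def T1 (γ : G.V) : Set (Finset G.V) := { Z | G.IsKTail Z 1 ∧ γ ∈ Z ∧ G.base ∉ Z }

/-- The defining condition for the 2-tails entering `T²_{γ,γ'}`. -/
def cond2 (γ γ' : G.V) (Z : Finset G.V) : Prop :=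
  G.IsKTail Z 2 ∧ γ ∈ Z ∧ γ' ∈ Z ∧ G.base ∉ Z

/-- `W 0 ≺ W 1 ≺ ⋯ ≺ W (M-1)` is the nested set `T²_{γ,γ'}` of 2-tails:
each `W t` is minimal among the 2-tails `Z ⊇ C_γ ∪ C_γ'` with `σ(0) ∈ Zᶜ`
and `W (t-1) ≺ Z` (starting from `W_{-1} = ∅`), and the chain is maximal. -/
def IsNested2 (γ γ' : G.V) (M : ℕ) (W : ℕ → Finset G.V) : Prop :=
  (∀ t < M, Minimal (fun Z => G.cond2 γ γ' Z ∧ G.prec (if t = 0 then ∅ else W (t - 1)) Z) (W t)) ∧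
  ¬ ∃ Z, G.cond2 γ γ' Z ∧ G.prec (if M = 0 then ∅ else W (M - 1)) Z

/-- The set underlying a finite chain `W 0, …, W (M-1)`. -/
def chainSet (M : ℕ) (W : ℕ → Finset G.V) : Set (Finset G.V) := { Z | ∃ t < M, W t = Z }

/-- The defining condition for the 3-tails entering `T³_{γ,γ'}`:
3-tails that are moreover free with respect to every member of `T²_{γ,γ'}`. -/
def cond3 (γ γ' : G.V) (T2 : Set (Finset G.V)) (Z : Finset G.V) : Prop :=
  G.IsKTail Z 3 ∧ γ ∈ Z ∧ γ' ∈ Z ∧ G.base ∉ Z ∧ ∀ W ∈ T2, G.free Z W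

/-- `W 0 ≺ ⋯ ≺ W (M-1)` is the nested set `T³_{γ,γ'}` of 3-tails (relative to
the set `T2` of nested 2-tails). -/
def IsNested3 (γ γ' : G.V) (T2 : Set (Finset G.V)) (M : ℕ) (W : ℕ → Finset G.V) : Prop :=
  (∀ t < M, Minimal (fun Z => G.cond3 γ γ' T2 Z ∧ G.prec (if t = 0 then ∅ else W (t - 1)) Z) (W t)) ∧
  ¬ ∃ Z, G.cond3 γ γ' T2 Z ∧ G.prec (if M = 0 then ∅ else W (M - 1)) Z

end NodalGraph

/-!
A node lying on a tail with at least two terminal points is nonseparating, so a proper subcurve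
bounded by such nodes has at least two terminal points, and it is a tail as soon as it has at most
three. With the submodularity of `Z ↦ k_Z` this makes the subcurves competing for each step of a
nested set stable under intersection: every step is the *least* competitor, and a nested set is
the greedy chain of its family of tails.

Let `e` be a node joining `C_i` and `C_j`. By submodularity again, one of the two nested sets, say
that of `j`, consists of subcurves containing both components, which makes it the greedy chain of
the tails for `i` that avoid `e`. Now let `A₁ ≺ A₂ ≺ ⋯` and `B₁ ≺ B₂ ≺ ⋯` be the greedy chains of
a family and of its members avoiding one given node. They agree up to the first `A_t` through that
node, and from there on they zigzag, `A_t ⊂ B_t ⊂ A_{t+1} ⊂ ⋯`, consecutive members sharing a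
terminal point; as soon as they would not, the chains merge.

For 3-tails the freeness conditions for `i` and `j` may differ. But in a zigzag of 2-tails all
shared terminal points cancel, so the two sets of nodes to avoid differ by `e` and at most one
further node, and the comparison of greedy chains applies to that node.
-/

namespace NodalGraph

variable {G : NodalGraph} {A B C X Y Z : Finset G.V} {e f : G.N} {i j κ : G.V} {m n : ℕ}

section TerminalPoints

lemma mem_term : e ∈ G.Term Z ↔ ¬((G.ends e).1 ∈ Z ↔ (G.ends e).2 ∈ Z) := by
  simp only [Term, mem_filter, mem_univ, true_and]
  tauto

lemma mem_term_of_ends (he : G.ends e = (i, j) ∨ G.ends e = (j, i)) :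
    e ∈ G.Term Z ↔ ¬(i ∈ Z ↔ j ∈ Z) := by
  rcases he with h | h <;> simp only [mem_term, h]
  tauto

lemma term_empty : G.Term ∅ = ∅ := by
  simp [Term]

lemma term_univ : G.Term univ = ∅ := by
  simp [Term]

lemma term_compl (Z : Finset G.V) : G.Term Zᶜ = G.Term Z := by
  ext
  simp only [mem_term, mem_compl, not_iff_not]

lemma k_compl (Z : Finset G.V) : G.k Zᶜ = G.k Z := by
  rw [k, term_compl, k]

lemma term_inter_subset (A B : Finset G.V) : G.Term (A ∩ B) ⊆ G.Term A ∪ G.Term B := by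
  intro
  simp only [mem_union, mem_inter, mem_term]
  tauto

lemma term_union_subset (A B : Finset G.V) : G.Term (A ∪ B) ⊆ G.Term A ∪ G.Term B := by
  intro
  simp only [mem_union, mem_term]
  tauto

lemma term_inter_inter_term_union_subset (A B : Finset G.V) :
    G.Term (A ∩ B) ∩ G.Term (A ∪ B) ⊆ G.Term A ∩ G.Term B := by
  intro
  simp only [mem_union, mem_inter, mem_term]
  tauto

lemma term_inter_term_subset (hAB : A ⊆ B) (hBC : B ⊆ C) : G.Term A ∩ G.Term C ⊆ G.Term B := by
  intro x
  have hA₁ := @hAB (G.ends x).1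
  have hA₂ := @hAB (G.ends x).2
  have hB₁ := @hBC (G.ends x).1
  have hB₂ := @hBC (G.ends x).2
  simp only [mem_inter, mem_term]
  tauto

lemma k_inter_add_k_union_add_two_le (hA : e ∈ G.Term A) (hB : e ∈ G.Term B)
    (hI : e ∉ G.Term (A ∩ B)) (hU : e ∉ G.Term (A ∪ B)) :
    G.k (A ∩ B) + G.k (A ∪ B) + 2 ≤ G.k A + G.k B := by
  have hunion : #(G.Term (A ∩ B) ∪ G.Term (A ∪ B)) < #(G.Term A ∪ G.Term B) := by
    refine card_lt_card (ssubset_iff_of_subset ?_ |>.2 ⟨e, ?_⟩)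
    · exact union_subset (term_inter_subset A B) (term_union_subset A B)
    · simp only [mem_union, hA, hI, hU, true_or, or_false, not_false_iff, and_self]
  have hinter : #(G.Term (A ∩ B) ∩ G.Term (A ∪ B)) < #(G.Term A ∩ G.Term B) := by
    refine card_lt_card (ssubset_iff_of_subset ?_ |>.2 ⟨e, ?_⟩)
    · exact term_inter_inter_term_union_subset A B
    · simp only [mem_inter, hA, hB, hI, false_and, not_false_iff, and_self]
  have hI' := card_union_add_card_inter (G.Term (A ∩ B)) (G.Term (A ∪ B))
  have hU' := card_union_add_card_inter (G.Term A) (G.Term B)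
  simp only [k]
  lia

lemma k_inter_add_k_union_le (A B : Finset G.V) :
    G.k (A ∩ B) + G.k (A ∪ B) ≤ G.k A + G.k B := by
  simp only [k, ← card_union_add_card_inter (G.Term (A ∩ B)),
    ← card_union_add_card_inter (G.Term A)]
  exact add_le_add
    (card_le_card (union_subset (term_inter_subset A B) (term_union_subset A B)))
    (card_le_card (term_inter_inter_term_union_subset A B))

lemma term_union_eq_of_not_adj (hAB : Disjoint A B) (h : ∀ a ∈ A, ∀ b ∈ B, ¬G.Adj a b) :
    G.Term (A ∪ B) = G.Term A ∪ G.Term B ∧ Disjoint (G.Term A) (G.Term B) := by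
  rw [disjoint_left] at hAB
  have h₁ (f : G.N) : ¬((G.ends f).1 ∈ A ∧ (G.ends f).2 ∈ B) :=
    fun hf ↦ h _ hf.1 _ hf.2 ⟨f, Or.inl rfl⟩
  have h₂ (f : G.N) : ¬((G.ends f).2 ∈ A ∧ (G.ends f).1 ∈ B) :=
    fun hf ↦ h _ hf.1 _ hf.2 ⟨f, Or.inr rfl⟩
  refine ⟨Finset.ext fun f ↦ ?_, disjoint_left.2 fun f ↦ ?_⟩ <;>
  · have hd₁ := @hAB (G.ends f).1
    have hd₂ := @hAB (G.ends f).2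
    specialize h₁ f
    specialize h₂ f
    simp only [mem_union, mem_term]
    tauto

end TerminalPoints

section Connectedness

lemma exists_mem_term_crosses {u v : G.V}
    (h : Relation.ReflTransGen (fun a b ↦ a ∈ Z ∧ b ∈ Z ∧ G.Adj a b) u v)
    (hu : u ∈ A) (hv : v ∉ A) : ∃ f ∈ G.Term A, G.crosses Z f := by
  induction h with
  | refl => exact absurd hu hv
  | @tail b c _ hbc ih =>
    by_cases hb : b ∈ A
    · obtain ⟨hbZ, hcZ, f, hf⟩ := hbc
      refine ⟨f, by simp only [mem_term_of_ends hf, hb, hv]; decide, ?_⟩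
      rcases hf with hf | hf <;> simp [crosses, hf, hbZ, hcZ]
    · exact ih hb

lemma ConnSub.subset_or_subset_compl (hY : G.ConnSub Y) (h : ∀ f ∈ G.Term A, ¬G.crosses Y f) :
    Y ⊆ A ∨ Y ⊆ Aᶜ := by
  by_contra! hcon
  obtain ⟨v, hvY, hvA⟩ := not_subset.1 hcon.1
  obtain ⟨u, huY, huA⟩ := not_subset.1 hcon.2
  obtain ⟨f, hfA, hfY⟩ := exists_mem_term_crosses (hY.2 u huY v hvY) (by simpa using huA) hvA
  exact h f hfA hfY

lemma Connected.term_nonempty (hc : G.Connected) (hA : A.Nonempty) (hA' : A ≠ univ) :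
    (G.Term A).Nonempty := by
  by_contra h
  rcases hc.subset_or_subset_compl (A := A) (by simp [not_nonempty_iff_eq_empty.1 h])
    with hsub | hsub
  · exact hA' (univ_subset_iff.1 hsub)
  · exact hA.ne_empty (compl_eq_univ_iff A |>.1 (univ_subset_iff.1 hsub))

lemma exists_disconnection (hZ : Z.Nonempty) (h : ¬G.ConnSub Z) :
    ∃ A B, A.Nonempty ∧ B.Nonempty ∧ Disjoint A B ∧ A ∪ B = Z ∧
      ∀ a ∈ A, ∀ b ∈ B, ¬G.Adj a b := by
  classical
  obtain ⟨u, hu, v, hv, huv⟩ : ∃ u ∈ Z, ∃ v ∈ Z,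
      ¬Relation.ReflTransGen (fun a b ↦ a ∈ Z ∧ b ∈ Z ∧ G.Adj a b) u v := by
    simpa [ConnSub, hZ] using h
  let reach (w : G.V) : Prop :=
    Relation.ReflTransGen (fun a b ↦ a ∈ Z ∧ b ∈ Z ∧ G.Adj a b) u w
  refine ⟨Z.filter reach, Z.filter (¬reach ·), ⟨u, by simp [hu, reach, Relation.ReflTransGen.refl]⟩,
    ⟨v, by simp [hv, huv, reach]⟩, disjoint_filter_filter_not _ _ _,
    filter_union_filter_not_eq _ _, fun a ha b hb hab ↦ ?_⟩
  rw [mem_filter] at ha hb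
  exact hb.2 (ha.2.tail ⟨ha.1, hb.1, hab⟩)

end Connectedness

section Nonseparating

/-- A separating node: it is the only terminal point of some subcurve. -/
def IsSeparating (G : NodalGraph) (f : G.N) : Prop := ∃ A, G.Term A = {f}

/-- None of the terminal points of `Z` is a separating node. This property is inherited by
intersections and unions, and turns a small number of terminal points into a tail. -/
def HasNonsepTerm (G : NodalGraph) (Z : Finset G.V) : Prop := ∀ f ∈ G.Term Z, ¬G.IsSeparating f

lemma IsTail.hasNonsepTerm (hY : G.IsTail Y) (hk : 2 ≤ G.k Y) : G.HasNonsepTerm Y := by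
  rintro f hf ⟨A, hA⟩
  have hkA : G.k A = 1 := by rw [k, hA, card_singleton]
  have hYf : ¬G.crosses Y f := by
    rw [mem_term] at hf
    unfold crosses
    tauto
  have hYf' : ¬G.crosses Yᶜ f := by
    simp only [mem_term, crosses, mem_compl] at hf ⊢
    tauto
  have hAY : Y ⊆ A ∨ Y ⊆ Aᶜ := hY.2.1.subset_or_subset_compl (by simpa [hA] using hYf)
  have hAY' : Yᶜ ⊆ A ∨ Yᶜ ⊆ Aᶜ := hY.2.2.subset_or_subset_compl (by simpa [hA] using hYf')
  rcases hAY with h | h <;> rcases hAY' with h' | h'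
  · have : A = univ := univ_subset_iff.1 (union_compl Y ▸ union_subset h h')
    simp [this, term_univ] at hA
  · rw [h.antisymm (compl_subset_compl.1 h')] at hk
    lia
  · rw [h.antisymm (compl_le_of_compl_le h'), k_compl] at hk
    lia
  · have : Aᶜ = univ := univ_subset_iff.1 (union_compl Y ▸ union_subset h h')
    rw [← term_compl, this, term_univ] at hA
    exact (singleton_ne_empty f hA.symm).elim

lemma HasNonsepTerm.inter (hA : G.HasNonsepTerm A) (hB : G.HasNonsepTerm B) :
    G.HasNonsepTerm (A ∩ B) := fun f hf ↦
  (mem_union.1 (term_inter_subset A B hf)).elim (hA f) (hB f)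

lemma HasNonsepTerm.union (hA : G.HasNonsepTerm A) (hB : G.HasNonsepTerm B) :
    G.HasNonsepTerm (A ∪ B) := fun f hf ↦
  (mem_union.1 (term_union_subset A B hf)).elim (hA f) (hB f)

lemma HasNonsepTerm.compl (hA : G.HasNonsepTerm A) : G.HasNonsepTerm Aᶜ := by
  rwa [HasNonsepTerm, term_compl]

lemma HasNonsepTerm.two_le_k (hA : G.HasNonsepTerm A) (hc : G.Connected) (hne : A.Nonempty)
    (hne' : A ≠ univ) : 2 ≤ G.k A := by
  have hpos : 0 < G.k A := (hc.term_nonempty hne hne').card_pos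
  by_contra hlt
  obtain ⟨f, hf⟩ := card_eq_one.1 (show #(G.Term A) = 1 by unfold k at *; lia)
  exact hA f (by simp [hf]) ⟨A, hf⟩

lemma HasNonsepTerm.connSub (hZ : G.HasNonsepTerm Z) (hc : G.Connected) (hne : Z.Nonempty)
    (hk : G.k Z ≤ 3) : G.ConnSub Z := by
  by_contra hcon
  obtain ⟨A, B, hA, hB, hAB, rfl, hadj⟩ := exists_disconnection hne hcon
  obtain ⟨hterm, hdisj⟩ := term_union_eq_of_not_adj hAB hadj
  have hA' : A ≠ univ := by
    rintro rfl
    exact hB.ne_empty (top_disjoint.1 hAB)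
  have hB' : B ≠ univ := by
    rintro rfl
    exact hA.ne_empty (disjoint_top.1 hAB)
  have hkA : 2 ≤ G.k A := HasNonsepTerm.two_le_k (fun f hf ↦ hZ f (by simp [hterm, hf])) hc hA hA'
  have hkB : 2 ≤ G.k B := HasNonsepTerm.two_le_k (fun f hf ↦ hZ f (by simp [hterm, hf])) hc hB hB'
  simp only [k] at *
  rw [hterm, card_union_of_disjoint hdisj] at hk
  lia

lemma HasNonsepTerm.isTail (hZ : G.HasNonsepTerm Z) (hc : G.Connected) (hne : Z.Nonempty)
    (hne' : Z ≠ univ) (hk : G.k Z ≤ 3) : G.IsTail Z :=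
  ⟨hne', hZ.connSub hc hne hk, hZ.compl.connSub hc (nonempty_iff_ne_empty.2 (by simpa using hne'))
    (by rwa [k_compl])⟩

end Nonseparating

section Prec

lemma prec_iff : G.prec A B ↔ A ⊂ B ∧ Disjoint (G.Term A) (G.Term B) := by
  rw [prec, disjoint_iff_inter_eq_empty]

lemma prec_empty (hZ : Z.Nonempty) : G.prec ∅ Z :=
  prec_iff.2 ⟨empty_ssubset.2 hZ, by simp [term_empty]⟩

lemma prec.notMem_term (h : G.prec A B) (hf : f ∈ G.Term A) : f ∉ G.Term B :=
  disjoint_left.1 (prec_iff.1 h).2 hf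

lemma prec.of_subset_left (hAB : A ⊆ B) (hBC : G.prec B C) : G.prec A C := by
  rw [prec_iff] at hBC ⊢
  refine ⟨hAB.trans_ssubset hBC.1, disjoint_left.2 fun x hxA hxC ↦ ?_⟩
  have hxB := term_inter_term_subset hAB hBC.1.subset (mem_inter.2 ⟨hxA, hxC⟩)
  exact disjoint_left.1 hBC.2 hxB hxC

lemma prec.trans_subset (hAB : G.prec A B) (hBC : B ⊆ C) : G.prec A C := by
  rw [prec_iff] at hAB ⊢
  refine ⟨hAB.1.trans_subset hBC, disjoint_left.2 fun x hxA hxC ↦ ?_⟩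
  have hxB := term_inter_term_subset hAB.1.subset hBC (mem_inter.2 ⟨hxA, hxC⟩)
  exact disjoint_left.1 hAB.2 hxA hxB

lemma prec.inter (hX : G.prec A X) (hY : G.prec A Y) (hXY : (G.Term (X ∩ Y)).Nonempty) :
    G.prec A (X ∩ Y) := by
  rw [prec_iff] at *
  have hdisj : Disjoint (G.Term A) (G.Term (X ∩ Y)) :=
    (disjoint_union_right.2 ⟨hX.2, hY.2⟩).mono_right (term_inter_subset X Y)
  refine ⟨(subset_inter hX.1.subset hY.1.subset).ssubset_of_ne fun h ↦ ?_, hdisj⟩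
  rw [← h, disjoint_self] at hdisj
  simp [← h, bot_eq_empty ▸ hdisj] at hXY

/-- A terminal pair: the subcurves share a terminal point. -/
def IsTerminalPair (G : NodalGraph) (A B : Finset G.V) : Prop := (G.Term A ∩ G.Term B).Nonempty

lemma prec_or_isTerminalPair (h : A ⊂ B) : G.prec A B ∨ G.IsTerminalPair A B := by
  rw [prec, IsTerminalPair, nonempty_iff_ne_empty]
  tauto

lemma prec.not_isTerminalPair (h : G.prec A B) : ¬G.IsTerminalPair A B := by
  simp [IsTerminalPair, h.2]

/-- A set of subcurves that is totally ordered by inclusion and whose consecutive members form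
terminal pairs. -/
def IsTerminalChain (G : NodalGraph) (D : Set (Finset G.V)) : Prop :=
  (∀ X ∈ D, ∀ Y ∈ D, X ⊆ Y ∨ Y ⊆ X) ∧
    ∀ X ∈ D, ∀ Y ∈ D, X ⊂ Y → (¬∃ Z ∈ D, X ⊂ Z ∧ Z ⊂ Y) → G.IsTerminalPair X Y

lemma isTerminalChain_empty : G.IsTerminalChain ∅ := by
  simp [IsTerminalChain]

lemma isTerminalChain_singleton (A : Finset G.V) : G.IsTerminalChain {A} := by
  simp [IsTerminalChain]

lemma IsTerminalChain.insert {D : Set (Finset G.V)} (hD : G.IsTerminalChain D)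
    (hB : IsLeast D B) (hAB : A ⊂ B) (hterm : G.IsTerminalPair A B) :
    G.IsTerminalChain (insert A D) := by
  have hA (Z : Finset G.V) (hZ : Z ∈ D) : A ⊂ Z := hAB.trans_subset (hB.2 hZ)
  refine ⟨?_, ?_⟩
  · rintro X (rfl | hX) Y (rfl | hY)
    · exact Or.inl Subset.rfl
    · exact Or.inl (hA Y hY).subset
    · exact Or.inr (hA X hX).subset
    · exact hD.1 X hX Y hY
  · rintro X (rfl | hX) Y (rfl | hY) hXY hcons
    · exact absurd rfl hXY.ne
    · rcases (hB.2 hY).eq_or_lt with rfl | hBY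
      · exact hterm
      · exact absurd ⟨B, Or.inr hB.1, hAB, hBY⟩ hcons
    · exact absurd (hXY.trans (hA X hX)) (ssubset_irrefl X)
    · exact hD.2 X hX Y hY hXY fun ⟨Z, hZ, hlt⟩ ↦ hcons ⟨Z, Or.inr hZ, hlt⟩

end Prec

section GreedyChain

variable {P Q : Finset G.V → Prop} {K L L' : List (Finset G.V)}

/-- The greedy chain of a family `P` of subcurves above `A`: its first member is the least `Z` in
`P` with `A ≺ Z`, and each member is followed by the least `Z` in `P` succeeding it for `≺`, as
long as there is one. Nested sets are greedy chains above `∅`. -/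
inductive GreedyChain (G : NodalGraph) (P : Finset G.V → Prop) :
    Finset G.V → List (Finset G.V) → Prop
  | nil {A : Finset G.V} (h : ∀ Z, P Z → ¬G.prec A Z) : GreedyChain G P A []
  | cons {A C : Finset G.V} {L : List (Finset G.V)} (hC : IsLeast {Z | P Z ∧ G.prec A Z} C)
      (hL : GreedyChain G P C L) : GreedyChain G P A (C :: L)

/-- The nodes that are terminal points of a member of `T`. -/
def terminals (G : NodalGraph) (T : Set (Finset G.V)) : Set G.N := {x | ∃ Z ∈ T, x ∈ G.Term Z}

namespace GreedyChain

lemma mem (h : G.GreedyChain P A L) (hZ : Z ∈ L) : P Z := by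
  induction h with
  | nil => simp at hZ
  | cons hC _ ih =>
    rcases List.mem_cons.1 hZ with rfl | hZ
    · exact hC.1.1
    · exact ih hZ

lemma pairwise_prec (h : G.GreedyChain P A L) : (A :: L).Pairwise G.prec := by
  induction h with
  | nil => simp
  | cons hC _ ih =>
    refine List.pairwise_cons.2 ⟨fun Z hZ ↦ ?_, ih⟩
    rcases List.mem_cons.1 hZ with rfl | hZ
    · exact hC.1.2
    · exact prec.of_subset_left hC.1.2.1.subset (List.rel_of_pairwise_cons ih hZ)

lemma eq (h : G.GreedyChain P A L) (h' : G.GreedyChain P A L') : L = L' := by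
  induction h generalizing L' with
  | nil hA =>
    cases h' with
    | nil => rfl
    | cons hC' => exact absurd hC'.1.2 (hA _ hC'.1.1)
  | cons hC _ ih =>
    cases h' with
    | nil hA => exact absurd hC.1.2 (hA _ hC.1.1)
    | cons hC' hL' =>
      obtain rfl := hC.unique hC'
      rw [ih hL']

lemma of_imp (h : G.GreedyChain P A L) (hQP : ∀ Z, Q Z → P Z) (hL : ∀ Z ∈ L, Q Z) :
    G.GreedyChain Q A L := by
  induction h with
  | nil hA => exact .nil fun Z hZ ↦ hA Z (hQP Z hZ)
  | cons hC _ ih =>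
    exact .cons ⟨⟨hL _ (by simp), hC.1.2⟩, fun Z hZ ↦ hC.2 ⟨hQP Z hZ.1, hZ.2⟩⟩
      (ih fun Z hZ ↦ hL Z (by simp [hZ]))

lemma congr_of_prec (h : G.GreedyChain P A L) (hPQ : ∀ Z, G.prec A Z → (P Z ↔ Q Z)) :
    G.GreedyChain Q A L := by
  induction h with
  | nil hA => exact .nil fun Z hZ hAZ ↦ hA Z ((hPQ Z hAZ).2 hZ) hAZ
  | cons hC _ ih =>
    refine .cons ⟨⟨(hPQ _ hC.1.2).1 hC.1.1, hC.1.2⟩, fun Z hZ ↦ ?_⟩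
      (ih fun Z hZ ↦ hPQ Z (prec.of_subset_left hC.1.2.1.subset hZ))
    exact hC.2 ⟨(hPQ Z hZ.2).2 hZ.1, hZ.2⟩

lemma of_subset (h : G.GreedyChain P A L) (hAB : A ⊆ B)
    (hprec : ∀ Z, P Z → G.prec A Z → G.prec B Z) : G.GreedyChain P B L := by
  cases h with
  | nil hA => exact .nil fun Z hZ hBZ ↦ hA Z hZ (prec.of_subset_left hAB hBZ)
  | cons hC hL =>
    exact .cons ⟨⟨hC.1.1, hprec _ hC.1.1 hC.1.2⟩,
      fun Z hZ ↦ hC.2 ⟨hZ.1, prec.of_subset_left hAB hZ.2⟩⟩ hL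

lemma exists_mem_terminals (h : G.GreedyChain P A L) (hY : P Y) (hAY : G.prec A Y)
    (hne : (G.Term Y).Nonempty) : ∃ x ∈ G.Term Y, x ∈ G.terminals {Z | Z ∈ L} := by
  induction h with
  | nil hA => exact absurd hAY (hA Y hY)
  | @cons A C L hC _ ih =>
    have hCY : C ⊆ Y := hC.2 ⟨hY, hAY⟩
    rcases hCY.eq_or_ssubset with rfl | hlt
    · exact hne.imp fun x hx ↦ ⟨hx, C, by simp, hx⟩
    · rcases prec_or_isTerminalPair hlt with hprec | ⟨x, hx⟩
      · obtain ⟨x, hxY, W, hW, hxW⟩ := ih hprec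
        exact ⟨x, hxY, W, by simpa using Or.inr hW, hxW⟩
      · rw [mem_inter] at hx
        exact ⟨x, hx.2, C, by simp, hx.1⟩

end GreedyChain

lemma isLeast_of_minimal_prec (hP : ∀ X Y, P X → P Y → P (X ∩ Y))
    (hterm : ∀ Z, P Z → (G.Term Z).Nonempty) (h : Minimal (fun Z ↦ P Z ∧ G.prec A Z) C) :
    IsLeast {Z | P Z ∧ G.prec A Z} C := by
  refine DirectedOn.minimal_iff_isLeast (s := {Z | P Z ∧ G.prec A Z}) ?_ |>.1 h
  rintro X ⟨hX, hAX⟩ Y ⟨hY, hAY⟩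
  have hXY := hP X Y hX hY
  exact ⟨X ∩ Y, ⟨hXY, hAX.inter hAY (hterm _ hXY)⟩, inter_subset_left, inter_subset_right⟩

lemma greedyChain_map_range (hP : ∀ X Y, P X → P Y → P (X ∩ Y))
    (hterm : ∀ Z, P Z → (G.Term Z).Nonempty) {M : ℕ} {W : ℕ → Finset G.V}
    (hmin : ∀ t < M, Minimal (fun Z ↦ P Z ∧ G.prec (if t = 0 then A else W (t - 1)) Z) (W t))
    (hmax : ¬∃ Z, P Z ∧ G.prec (if M = 0 then A else W (M - 1)) Z) :
    G.GreedyChain P A ((List.range M).map W) := by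
  induction M generalizing A W with
  | zero => exact .nil fun Z hZ hAZ ↦ hmax ⟨Z, hZ, hAZ⟩
  | succ M ih =>
    rw [List.range_succ_eq_map, List.map_cons, List.map_map]
    have hshift (t : ℕ) : (if t = 0 then W 0 else W (t - 1 + 1)) = W t := by
      cases t <;> simp
    refine .cons (isLeast_of_minimal_prec hP hterm (hmin 0 M.succ_pos)) (ih (fun t ht ↦ ?_) ?_)
    · simpa [hshift] using hmin (t + 1) (Nat.succ_lt_succ ht)
    · simpa [hshift] using hmax

lemma chainSet_eq_mem_map_range (M : ℕ) (W : ℕ → Finset G.V) :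
    G.chainSet M W = {Z | Z ∈ (List.range M).map W} := by
  simp [chainSet]

end GreedyChain

section Zigzag

variable {P : Finset G.V → Prop} {K L L' : List (Finset G.V)}

/-- The relation between `A :: L` and `L'` saying that, up to a common tail, their members
alternate in one increasing sequence that starts with `A` and whose consecutive members form
terminal pairs. -/
inductive Zigzag (G : NodalGraph) :
    Finset G.V → List (Finset G.V) → List (Finset G.V) → Prop
  | single (A : Finset G.V) (L : List (Finset G.V)) : Zigzag G A L L
  | swap {A B : Finset G.V} {L L' : List (Finset G.V)} :
      A ⊂ B → G.IsTerminalPair A B → Zigzag G B L' L → Zigzag G A L (B :: L')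

lemma notMem_of_pairwise_prec (h : (A :: L).Pairwise G.prec) : A ∉ L :=
  fun hA ↦ absurd rfl (List.rel_of_pairwise_cons h hA).1.ne

lemma symmDiff_setOf_mem_cons_left (hA : A ∉ L') :
    symmDiff {Z | Z ∈ A :: L} {Z | Z ∈ L'} =
      insert A (symmDiff {Z | Z ∈ L'} {Z | Z ∈ L}) := by
  ext Z
  by_cases hZ : Z = A
  · simp [Set.mem_symmDiff, hZ, hA]
  · simp [Set.mem_symmDiff, hZ, or_comm]

lemma symmDiff_setOf_mem_append (hL : (K ++ L).Pairwise G.prec)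
    (hL' : (K ++ L').Pairwise G.prec) :
    symmDiff {Z | Z ∈ K ++ L} {Z | Z ∈ K ++ L'} = symmDiff {Z | Z ∈ L} {Z | Z ∈ L'} := by
  have hK (Z : Finset G.V) (hZ : Z ∈ K) : Z ∉ L ∧ Z ∉ L' :=
    ⟨fun h ↦ absurd rfl ((List.pairwise_append.1 hL).2.2 Z hZ Z h).1.ne,
      fun h ↦ absurd rfl ((List.pairwise_append.1 hL').2.2 Z hZ Z h).1.ne⟩
  ext Z
  have := hK Z
  simp only [Set.mem_symmDiff, Set.mem_ofPred_eq, List.mem_append]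
  tauto

lemma Zigzag.isTerminalChain (h : G.Zigzag A L L') (hL : (A :: L).Pairwise G.prec)
    (hL' : L'.Pairwise G.prec) :
    G.IsTerminalChain (symmDiff {Z | Z ∈ A :: L} {Z | Z ∈ L'}) ∧
      IsLeast (symmDiff {Z | Z ∈ A :: L} {Z | Z ∈ L'}) A := by
  induction h with
  | single A L =>
    rw [symmDiff_setOf_mem_cons_left (notMem_of_pairwise_prec hL), symmDiff_self,
      Set.bot_eq_empty, insert_empty_eq]
    exact ⟨isTerminalChain_singleton A, isLeast_singleton⟩
  | @swap A B L L' hAB hterm _ ih =>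
    obtain ⟨hchain, hleast⟩ := ih hL' hL.of_cons
    have hA' : A ∉ B :: L' := by
      rintro (_ | ⟨_, hA⟩)
      · exact ssubset_irrefl A hAB
      · exact ssubset_asymm hAB (List.rel_of_pairwise_cons hL' hA).1
    rw [symmDiff_setOf_mem_cons_left hA']
    refine ⟨hchain.insert hleast hAB hterm, Set.mem_insert _ _, ?_⟩
    rintro Z (rfl | hZ)
    · exact le_rfl
    · exact hAB.subset.trans (hleast.2 hZ)

lemma terminals_cons (A : Finset G.V) (L : List (Finset G.V)) :
    G.terminals {Z | Z ∈ A :: L} = ↑(G.Term A) ∪ G.terminals {Z | Z ∈ L} := by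
  ext
  simp [terminals]

lemma terminals_append (K L : List (Finset G.V)) :
    G.terminals {Z | Z ∈ K ++ L} = G.terminals {Z | Z ∈ K} ∪ G.terminals {Z | Z ∈ L} := by
  ext
  simp [terminals, or_and_right, exists_or]

lemma exists_term_eq_pair (hA : G.k A = 2) (hf : f ∈ G.Term A) : ∃ c, G.Term A = {f, c} := by
  obtain ⟨x, y, -, hxy⟩ := card_eq_two.1 hA
  rw [hxy, mem_insert, mem_singleton] at hf
  rcases hf with rfl | rfl
  · exact ⟨y, hxy⟩
  · exact ⟨x, hxy.trans (pair_comm _ _)⟩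

/-- Each terminal point shared by two consecutive members of the zigzag lies on both sides and
cancels: only `f`, at the start, and one node at the end remain. -/
lemma Zigzag.symmDiff_terminals_subset (h : G.Zigzag A L L') (hL : (A :: L).Pairwise G.prec)
    (hL' : L'.Pairwise G.prec) (hk : ∀ Z ∈ A :: L, G.k Z = 2) (hk' : ∀ Z ∈ L', G.k Z = 2)
    (hf : f ∈ G.Term A) (hf' : f ∉ G.terminals {Z | Z ∈ L'}) :
    ∃ b, symmDiff (G.terminals {Z | Z ∈ A :: L}) (G.terminals {Z | Z ∈ L'}) ⊆ {f, b} := by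
  induction h generalizing f with
  | single A L =>
    obtain ⟨c, hc⟩ := exists_term_eq_pair (hk A (by simp)) hf
    refine ⟨c, fun x ↦ ?_⟩
    simp only [terminals_cons, hc, Set.mem_symmDiff, Set.mem_union, mem_coe, mem_insert,
      mem_singleton, Set.mem_insert_iff, Set.mem_singleton_iff]
    tauto
  | @swap A B L L' _ hterm _ ih =>
    obtain ⟨c, hc⟩ := exists_term_eq_pair (hk A (by simp)) hf
    have hcB : c ∈ G.Term B := by
      obtain ⟨x, hx⟩ := hterm
      simp only [hc, mem_inter, mem_insert, mem_singleton] at hx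
      rcases hx with ⟨rfl | rfl, hxB⟩
      · exact absurd ⟨B, by simp, hxB⟩ hf'
      · exact hxB
    have hcL : c ∉ G.terminals {Z | Z ∈ L} := by
      rintro ⟨Z, hZ, hcZ⟩
      exact (List.rel_of_pairwise_cons hL hZ).notMem_term (by simp [hc]) hcZ
    obtain ⟨b, hb⟩ := ih hL' hL.of_cons hk' (fun Z hZ ↦ hk Z (by simp [hZ])) hcB hcL
    refine ⟨b, fun x hx ↦ ?_⟩
    have hbx := @hb x
    have hcB' : c ∈ G.terminals {Z | Z ∈ B :: L'} := ⟨B, by simp, hcB⟩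
    simp only [terminals_cons A, hc, Set.mem_symmDiff, Set.mem_union, mem_coe, mem_insert,
      mem_singleton, Set.mem_insert_iff, Set.mem_singleton_iff] at hx hbx ⊢
    grind

namespace GreedyChain

lemma zigzag_of_isTerminalPair {A B : Finset G.V} {L L' : List (Finset G.V)}
    (h : G.GreedyChain P A L) (h' : G.GreedyChain P B L')
    (hAB : A ⊂ B) (hterm : G.IsTerminalPair A B) (hB : ∀ Z, P Z → G.prec A Z → B ⊆ Z) :
    G.Zigzag A L (B :: L') := by
  cases h with
  | nil hA =>
    obtain rfl := h'.eq (.nil fun Z hZ hBZ ↦ hA Z hZ (prec.of_subset_left hAB.subset hBZ))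
    exact .swap hAB hterm (.single B [])
  | @cons _ C L hC hL =>
    have hBC : B ⊂ C := (hB C hC.1.1 hC.1.2).ssubset_of_ne <| by
      rintro rfl
      exact hC.1.2.not_isTerminalPair hterm
    rcases prec_or_isTerminalPair hBC with hprec | hterm'
    · obtain rfl := h'.eq <| (cons hC hL).of_subset hAB.subset
        fun Z hZ hAZ ↦ hprec.trans_subset (hC.2 ⟨hZ, hAZ⟩)
      exact .swap hAB hterm (.single B _)
    · exact .swap hAB hterm <| zigzag_of_isTerminalPair h' hL hBC hterm'
        fun Z hZ hBZ ↦ hC.2 ⟨hZ, prec.of_subset_left hAB.subset hBZ⟩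
termination_by L.length + L'.length

lemma zigzag_of_mem_term (hC : G.prec A C) (hCleast : ∀ Z, P Z → G.prec A Z → C ⊆ Z)
    (hf : f ∈ G.Term C) (h : G.GreedyChain P C L)
    (h' : G.GreedyChain (fun Z ↦ P Z ∧ f ∉ G.Term Z) A L') : G.Zigzag C L L' := by
  have hQ : G.GreedyChain (fun Z ↦ P Z ∧ f ∉ G.Term Z) C L := h.of_imp (fun Z ↦ And.left)
    fun Z hZ ↦ ⟨h.mem hZ, (List.rel_of_pairwise_cons h.pairwise_prec hZ).notMem_term hf⟩
  have hAC : A ⊆ C := hC.1.subset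
  cases h' with
  | nil hA =>
    obtain rfl := hQ.eq (.nil fun Z hZ hCZ ↦ hA Z hZ (prec.of_subset_left hAC hCZ))
    exact .single C []
  | @cons _ B L' hB hL' =>
    obtain ⟨⟨hPB, hfB⟩, hAB⟩ := hB.1
    have hCB : C ⊂ B := (hCleast B hPB hAB).ssubset_of_ne fun h ↦ hfB (h ▸ hf)
    rcases prec_or_isTerminalPair hCB with hprec | hterm
    · obtain rfl := hQ.eq <| (cons hB hL').of_subset hAC
        fun Z hZ hAZ ↦ hprec.trans_subset (hB.2 ⟨hZ, hAZ⟩)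
      exact .single C _
    · have hfZ (Z : Finset G.V) (hBZ : G.prec B Z) : f ∉ G.Term Z := fun hfZ ↦
        hfB (term_inter_term_subset hCB.subset hBZ.1.subset (mem_inter.2 ⟨hf, hfZ⟩))
      have hPL' : G.GreedyChain P B L' :=
        hL'.congr_of_prec fun Z hBZ ↦ and_iff_left (hfZ Z hBZ)
      exact h.zigzag_of_isTerminalPair hPL' hCB hterm
        fun Z hZ hCZ ↦ hB.2 ⟨⟨hZ, hCZ.notMem_term hf⟩, prec.of_subset_left hAC hCZ⟩

lemma eq_or_exists_zigzag (h : G.GreedyChain P A L)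
    (h' : G.GreedyChain (fun Z ↦ P Z ∧ f ∉ G.Term Z) A L') :
    L = L' ∨ ∃ K C L₁ L₁', L = K ++ C :: L₁ ∧ L' = K ++ L₁' ∧ f ∈ G.Term C ∧
      G.Zigzag C L₁ L₁' := by
  induction h generalizing L' with
  | nil hA => exact Or.inl (eq (.nil fun Z hZ ↦ hA Z hZ.1) h')
  | @cons A C L hC hL ih =>
    by_cases hf : f ∈ G.Term C
    · exact Or.inr ⟨[], C, L, L', rfl, rfl, hf,
        zigzag_of_mem_term hC.1.2 (fun Z hZ hAZ ↦ hC.2 ⟨hZ, hAZ⟩) hf hL h'⟩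
    · cases h' with
      | nil hA => exact absurd hC.1.2 (hA C ⟨hC.1.1, hf⟩)
      | cons hB hL' =>
        obtain rfl := hB.unique ⟨⟨⟨hC.1.1, hf⟩, hC.1.2⟩, fun Z hZ ↦ hC.2 ⟨hZ.1.1, hZ.2⟩⟩
        rcases ih hL' with rfl | ⟨K, D, L₁, L₁', rfl, rfl, hD, hzig⟩
        · exact Or.inl rfl
        · exact Or.inr ⟨_ :: K, D, L₁, L₁', rfl, rfl, hD, hzig⟩

theorem isTerminalChain_symmDiff (h : G.GreedyChain P A L)
    (h' : G.GreedyChain (fun Z ↦ P Z ∧ f ∉ G.Term Z) A L') :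
    G.IsTerminalChain (symmDiff {Z | Z ∈ L} {Z | Z ∈ L'}) := by
  have hL := h.pairwise_prec.of_cons
  have hL' := h'.pairwise_prec.of_cons
  rcases h.eq_or_exists_zigzag h' with rfl | ⟨K, C, L₁, L₁', rfl, rfl, -, hzig⟩
  · rw [symmDiff_self]
    exact isTerminalChain_empty
  · rw [symmDiff_setOf_mem_append hL hL']
    exact (hzig.isTerminalChain (List.pairwise_append.1 hL).2.1
      (List.pairwise_append.1 hL').2.1).1

theorem exists_symmDiff_terminals_subset (h : G.GreedyChain P A L)
    (h' : G.GreedyChain (fun Z ↦ P Z ∧ f ∉ G.Term Z) A L') (hk : ∀ Z, P Z → G.k Z = 2) :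
    ∃ b, symmDiff (G.terminals {Z | Z ∈ L}) (G.terminals {Z | Z ∈ L'}) ⊆ {f, b} := by
  have hL := h.pairwise_prec.of_cons
  have hL' := h'.pairwise_prec.of_cons
  rcases h.eq_or_exists_zigzag h' with rfl | ⟨K, C, L₁, L₁', rfl, rfl, hf, hzig⟩
  · exact ⟨f, by simp⟩
  · have hf' : f ∉ G.terminals {Z | Z ∈ L₁'} := fun ⟨Z, hZ, hfZ⟩ ↦
      (h'.mem (List.mem_append_right K hZ)).2 hfZ
    obtain ⟨b, hb⟩ := hzig.symmDiff_terminals_subset (List.pairwise_append.1 hL).2.1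
      (List.pairwise_append.1 hL').2.1 (fun Z hZ ↦ hk Z (h.mem (List.mem_append_right K hZ)))
      (fun Z hZ ↦ hk Z (h'.mem (List.mem_append_right K hZ)).1) hf hf'
    refine ⟨b, Set.Subset.trans (fun x ↦ ?_) hb⟩
    simp only [terminals_append, Set.mem_symmDiff, Set.mem_union]
    tauto

end GreedyChain

end Zigzag

section FreeTails

variable {S S' : Finset G.V} {N N' : Set G.N} {b : G.N}

/-- An `m`-tail that contains the components in `S`, misses the marked point, and has no terminal
point in `N`. The nested sets `T²` and `T³` consist of such tails: `N` is empty for the former,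
and encodes freeness with respect to `T²` for the latter. -/
structure IsFreeTail (G : NodalGraph) (m : ℕ) (S : Finset G.V) (N : Set G.N) (Z : Finset G.V) :
    Prop where
  isKTail : G.IsKTail Z m
  subset : S ⊆ Z
  base_notMem : G.base ∉ Z
  notMem_term : ∀ x ∈ N, x ∉ G.Term Z

lemma isFreeTail_iff : G.IsFreeTail m S N Z ↔
    G.IsKTail Z m ∧ S ⊆ Z ∧ G.base ∉ Z ∧ ∀ x ∈ N, x ∉ G.Term Z :=
  ⟨fun ⟨hZ, hS, hb, hN⟩ ↦ ⟨hZ, hS, hb, hN⟩, fun ⟨hZ, hS, hb, hN⟩ ↦ ⟨hZ, hS, hb, hN⟩⟩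

lemma cond2_eq_isFreeTail (i κ : G.V) : G.cond2 i κ = G.IsFreeTail 2 {i, κ} ∅ := by
  ext Z
  simp [cond2, isFreeTail_iff, insert_subset_iff, and_assoc]

lemma cond3_eq_isFreeTail (i κ : G.V) (T : Set (Finset G.V)) :
    G.cond3 i κ T = G.IsFreeTail 3 {i, κ} (G.terminals T) := by
  ext Z
  have hfree : (∀ W ∈ T, G.free Z W) ↔ ∀ x ∈ G.terminals T, x ∉ G.Term Z := by
    simp only [free, ← disjoint_iff_inter_eq_empty, disjoint_right, terminals]
    exact ⟨fun h x ⟨W, hW, hx⟩ ↦ h W hW hx, fun h W hW x hx ↦ h x ⟨W, hW, hx⟩⟩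
  simp [cond3, isFreeTail_iff, insert_subset_iff, hfree, and_assoc]

lemma isFreeTail_insert_left (he : G.ends e = (i, j) ∨ G.ends e = (j, i)) (hi : i ∈ S) :
    G.IsFreeTail m (insert j S) N Z ↔ G.IsFreeTail m S N Z ∧ e ∉ G.Term Z := by
  have hiZ : S ⊆ Z → i ∈ Z := fun h ↦ h hi
  simp only [isFreeTail_iff, insert_subset_iff, mem_term_of_ends he]
  tauto

lemma isFreeTail_insert_right :
    G.IsFreeTail m S (insert f N) Z ↔ G.IsFreeTail m S N Z ∧ f ∉ G.Term Z := by
  simp only [isFreeTail_iff, Set.forall_mem_insert]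
  tauto

namespace IsFreeTail

lemma mono_left (hSS' : S ⊆ S') (h : G.IsFreeTail m S' N Z) : G.IsFreeTail m S N Z :=
  ⟨h.isKTail, hSS'.trans h.subset, h.base_notMem, h.notMem_term⟩

lemma nonempty (h : G.IsFreeTail m S N Z) : Z.Nonempty := h.isKTail.1.2.1.1

lemma term_nonempty (h : G.IsFreeTail m S N Z) (hc : G.Connected) : (G.Term Z).Nonempty :=
  hc.term_nonempty h.nonempty h.isKTail.1.1

lemma hasNonsepTerm (h : G.IsFreeTail m S N Z) (hm : 2 ≤ m) : G.HasNonsepTerm Z :=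
  h.isKTail.1.hasNonsepTerm (h.isKTail.2.symm ▸ hm)

lemma inter_ne_univ (hX : G.IsFreeTail m S N X) : X ∩ Y ≠ univ :=
  fun h ↦ hX.base_notMem (mem_of_mem_inter_left (h ▸ mem_univ G.base))

lemma union_ne_univ (hX : G.IsFreeTail m S N X) (hY : G.IsFreeTail n S' N' Y) : X ∪ Y ≠ univ :=
  fun h ↦ (mem_union.1 (h ▸ mem_univ G.base)).elim hX.base_notMem hY.base_notMem

lemma two_le_k_inter (hc : G.Connected) (hX : G.IsFreeTail m S N X)
    (hY : G.IsFreeTail n S' N' Y) (hm : 2 ≤ m) (hn : 2 ≤ n) (hne : (X ∩ Y).Nonempty) :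
    2 ≤ G.k (X ∩ Y) :=
  ((hX.hasNonsepTerm hm).inter (hY.hasNonsepTerm hn)).two_le_k hc hne hX.inter_ne_univ

lemma two_le_k_union (hc : G.Connected) (hX : G.IsFreeTail m S N X)
    (hY : G.IsFreeTail n S' N' Y) (hm : 2 ≤ m) (hn : 2 ≤ n) : 2 ≤ G.k (X ∪ Y) :=
  ((hX.hasNonsepTerm hm).union (hY.hasNonsepTerm hn)).two_le_k hc (hX.nonempty.inl)
    (hX.union_ne_univ hY)

lemma inter (hc : G.Connected) (hX : G.IsFreeTail m S N X) (hY : G.IsFreeTail n S N Y)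
    (hm : 2 ≤ m) (hn : 2 ≤ n) (hS : S.Nonempty) (hk : G.k (X ∩ Y) ≤ 3) :
    G.IsFreeTail (G.k (X ∩ Y)) S N (X ∩ Y) where
  isKTail := ⟨((hX.hasNonsepTerm hm).inter (hY.hasNonsepTerm hn)).isTail hc
    (hS.mono (subset_inter hX.subset hY.subset)) hX.inter_ne_univ hk, rfl⟩
  subset := subset_inter hX.subset hY.subset
  base_notMem h := hX.base_notMem (mem_of_mem_inter_left h)
  notMem_term x hx h :=
    (mem_union.1 (term_inter_subset X Y h)).elim (hX.notMem_term x hx) (hY.notMem_term x hx)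

lemma union (hc : G.Connected) (hX : G.IsFreeTail m S N X) (hY : G.IsFreeTail n S' N Y)
    (hm : 2 ≤ m) (hn : 2 ≤ n) (hk : G.k (X ∪ Y) ≤ 3) :
    G.IsFreeTail (G.k (X ∪ Y)) (S ∪ S') N (X ∪ Y) where
  isKTail := ⟨((hX.hasNonsepTerm hm).union (hY.hasNonsepTerm hn)).isTail hc
    hX.nonempty.inl (hX.union_ne_univ hY) hk, rfl⟩
  subset := union_subset_union hX.subset hY.subset
  base_notMem h := (mem_union.1 h).elim hX.base_notMem hY.base_notMem
  notMem_term x hx h :=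
    (mem_union.1 (term_union_subset X Y h)).elim (hX.notMem_term x hx) (hY.notMem_term x hx)

lemma inter_two (hc : G.Connected) (hS : S.Nonempty) (hX : G.IsFreeTail 2 S N X)
    (hY : G.IsFreeTail 2 S N Y) : G.IsFreeTail 2 S N (X ∩ Y) := by
  have hsub := k_inter_add_k_union_le X Y
  have hI := two_le_k_inter hc hX hY le_rfl le_rfl (hS.mono (subset_inter hX.subset hY.subset))
  have hU := two_le_k_union hc hX hY le_rfl le_rfl
  rw [hX.isKTail.2, hY.isKTail.2] at hsub
  have hk : G.k (X ∩ Y) = 2 := by lia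
  exact hk ▸ inter hc hX hY le_rfl le_rfl hS (by lia)

lemma inter_three (hc : G.Connected) (hS : S.Nonempty) (h₂ : ∀ Z, ¬G.IsFreeTail 2 S N Z)
    (hX : G.IsFreeTail 3 S N X) (hY : G.IsFreeTail 3 S N Y) : G.IsFreeTail 3 S N (X ∩ Y) := by
  have hsub := k_inter_add_k_union_le X Y
  have hI := two_le_k_inter hc hX hY (by simp) (by simp)
    (hS.mono (subset_inter hX.subset hY.subset))
  have hU := two_le_k_union hc hX hY (by simp) (by simp)
  rw [hX.isKTail.2, hY.isKTail.2] at hsub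
  have hU₂ : G.k (X ∪ Y) ≠ 2 := fun h ↦
    h₂ _ (mono_left subset_union_left (h ▸ union hc hX hY (by simp) (by simp) (by lia)))
  have hI₂ : G.k (X ∩ Y) ≠ 2 := fun h ↦
    h₂ _ (h ▸ inter hc hX hY (by simp) (by simp) hS (by lia))
  have hk : G.k (X ∩ Y) = 3 := by lia
  exact hk ▸ inter hc hX hY (by simp) (by simp) hS (by lia)

lemma k_union_add_four_le (hc : G.Connected) (he : G.ends e = (i, j) ∨ G.ends e = (j, i))
    (hX : G.IsFreeTail m {i, κ} N X) (hY : G.IsFreeTail n {j, κ} N' Y) (hm : 2 ≤ m)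
    (hn : 2 ≤ n) (hj : j ∉ X) (hi : i ∉ Y) : G.k (X ∪ Y) + 4 ≤ m + n := by
  have hiX : i ∈ X := hX.subset (by simp)
  have hjY : j ∈ Y := hY.subset (by simp)
  have hκ : κ ∈ X ∩ Y := mem_inter.2 ⟨hX.subset (by simp), hY.subset (by simp)⟩
  have hI := two_le_k_inter hc hX hY hm hn ⟨κ, hκ⟩
  have hsub : G.k (X ∩ Y) + G.k (X ∪ Y) + 2 ≤ G.k X + G.k Y := by
    apply k_inter_add_k_union_add_two_le (e := e) <;> simp [mem_term_of_ends he, hiX, hjY, hi, hj]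
  rw [hX.isKTail.2, hY.isKTail.2] at hsub
  lia

lemma mem_or_mem (hc : G.Connected) (he : G.ends e = (i, j) ∨ G.ends e = (j, i))
    (hX : G.IsFreeTail m {i, κ} N X) (hY : G.IsFreeTail n {j, κ} N' Y) (hm : 2 ≤ m)
    (hn : 2 ≤ n) (hmn : m + n ≤ 5) : j ∈ X ∨ i ∈ Y := by
  by_contra! h
  have hk := k_union_add_four_le hc he hX hY hm hn h.1 h.2
  have hU := two_le_k_union hc hX hY hm hn
  lia

lemma mem_or_mem_three (hc : G.Connected) (he : G.ends e = (i, j) ∨ G.ends e = (j, i))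
    (h₂ : ∀ Z, ¬G.IsFreeTail 2 {i, κ} N Z) (hX : G.IsFreeTail 3 {i, κ} N X)
    (hY : G.IsFreeTail 3 {j, κ} N Y) : j ∈ X ∨ i ∈ Y := by
  by_contra! h
  have hk := k_union_add_four_le hc he hX hY (by simp) (by simp) h.1 h.2
  have hU := two_le_k_union hc hX hY (by simp) (by simp)
  have hk₂ : G.k (X ∪ Y) = 2 := by lia
  exact h₂ _ (mono_left subset_union_left
    (hk₂ ▸ union hc hX hY (by simp) (by simp) (by lia)))

end IsFreeTail

end FreeTails

section NestedSets

lemma exists_ends_of_onComp (hij : i ≠ j) (h : ∃ e, G.onComp e i ∧ G.onComp e j) :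
    ∃ e, G.ends e = (i, j) ∨ G.ends e = (j, i) := by
  obtain ⟨e, hi, hj⟩ := h
  refine ⟨e, ?_⟩
  simp only [onComp, Prod.ext_iff] at *
  grind

lemma eq_or_eq_insert_of_symmDiff_subset {α : Type*} {s t : Set α} {a : α}
    (h : symmDiff s t ⊆ {a}) : s = t ∨ s = insert a t ∨ t = insert a s := by
  have hx (x : α) (hx : x ≠ a) : x ∈ s ↔ x ∈ t := by
    by_contra hst
    exact hx (h (Set.mem_symmDiff.2 (by tauto)))
  by_cases ha : a ∈ s
  · exact .inr (.inl (by grind))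
  · by_cases hat : a ∈ t
    · exact .inr (.inr (by grind))
    · exact .inl (by grind)

variable {S : Finset G.V} {N N' : Set G.N} {b : G.N} {L L' K K' : List (Finset G.V)}

lemma GreedyChain.not_isFreeTail_terminals (hL : G.GreedyChain (G.IsFreeTail m S ∅) ∅ L)
    (hc : G.Connected) (Z : Finset G.V) : ¬G.IsFreeTail m S (G.terminals {Z | Z ∈ L}) Z := by
  intro hZ
  obtain ⟨x, hxZ, hx⟩ := hL.exists_mem_terminals
    ⟨hZ.isKTail, hZ.subset, hZ.base_notMem, by simp⟩ (prec_empty hZ.nonempty)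
    (hZ.term_nonempty hc)
  exact hZ.notMem_term x hx hxZ

lemma IsNested2.exists_greedyChain {M : ℕ} {W : ℕ → Finset G.V} (h : G.IsNested2 i κ M W)
    (hc : G.Connected) :
    ∃ L, G.chainSet M W = {Z | Z ∈ L} ∧ G.GreedyChain (G.IsFreeTail 2 {i, κ} ∅) ∅ L := by
  rw [IsNested2, cond2_eq_isFreeTail] at h
  exact ⟨_, chainSet_eq_mem_map_range M W, greedyChain_map_range
    (fun _ _ ↦ IsFreeTail.inter_two hc (insert_nonempty i {κ}))
    (fun _ hZ ↦ hZ.term_nonempty hc) h.1 h.2⟩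

lemma IsNested3.exists_greedyChain {M : ℕ} {W : ℕ → Finset G.V}
    (h : G.IsNested3 i κ {Z | Z ∈ L} M W) (hc : G.Connected)
    (hL : G.GreedyChain (G.IsFreeTail 2 {i, κ} ∅) ∅ L) :
    ∃ K, G.chainSet M W = {Z | Z ∈ K} ∧
      G.GreedyChain (G.IsFreeTail 3 {i, κ} (G.terminals {Z | Z ∈ L})) ∅ K := by
  rw [IsNested3, cond3_eq_isFreeTail] at h
  exact ⟨_, chainSet_eq_mem_map_range M W, greedyChain_map_range
    (fun _ _ ↦ IsFreeTail.inter_three hc (insert_nonempty i {κ}) (hL.not_isFreeTail_terminals hc))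
    (fun _ hZ ↦ hZ.term_nonempty hc) h.1 h.2⟩

namespace GreedyChain

lemma isFreeTail_insert (h : G.GreedyChain (G.IsFreeTail m S N) A L) (hi : ∀ Z ∈ L, i ∈ Z) :
    G.GreedyChain (G.IsFreeTail m (insert i S) N) A L :=
  h.of_imp (fun _ ↦ .mono_left (subset_insert i S)) fun Z hZ ↦
    have hP := h.mem hZ
    ⟨hP.isKTail, insert_subset (hi Z hZ) hP.subset, hP.base_notMem, hP.notMem_term⟩

lemma isFreeTail_and_notMem_term (he : G.ends e = (i, j) ∨ G.ends e = (j, i))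
    (h : G.GreedyChain (G.IsFreeTail m {j, κ} N) A L) (hi : ∀ Z ∈ L, i ∈ Z) :
    G.GreedyChain (fun Z ↦ G.IsFreeTail m {i, κ} N Z ∧ e ∉ G.Term Z) A L := by
  simp only [← isFreeTail_insert_left he (mem_insert_self i {κ}), insert_comm j i]
  exact h.isFreeTail_insert hi

lemma isTerminalChain_symmDiff_of_forall_mem (he : G.ends e = (i, j) ∨ G.ends e = (j, i))
    (h : G.GreedyChain (G.IsFreeTail m {i, κ} N) A L)
    (h' : G.GreedyChain (G.IsFreeTail m {j, κ} N) A L')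
    (hmem : (∀ Z ∈ L, j ∈ Z) ∨ ∀ Z ∈ L', i ∈ Z) :
    G.IsTerminalChain (symmDiff {Z | Z ∈ L} {Z | Z ∈ L'}) := by
  rcases hmem with hj | hi
  · rw [symmDiff_comm]
    exact h'.isTerminalChain_symmDiff (h.isFreeTail_and_notMem_term he.symm hj)
  · exact h.isTerminalChain_symmDiff (h'.isFreeTail_and_notMem_term he hi)

lemma isTerminalChain_symmDiff_of_symmDiff_subset
    (h : G.GreedyChain (G.IsFreeTail m S N) A L) (h' : G.GreedyChain (G.IsFreeTail m S N') A L')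
    (hNN' : symmDiff N N' ⊆ {b}) :
    G.IsTerminalChain (symmDiff {Z | Z ∈ L} {Z | Z ∈ L'}) := by
  rcases eq_or_eq_insert_of_symmDiff_subset hNN' with rfl | rfl | rfl
  · rw [h.eq h', symmDiff_self]
    exact isTerminalChain_empty
  · rw [symmDiff_comm]
    exact h'.isTerminalChain_symmDiff (f := b) (by simpa only [← isFreeTail_insert_right] using h)
  · exact h.isTerminalChain_symmDiff (f := b) (by simpa only [← isFreeTail_insert_right] using h')

lemma isFreeTail_insert_insert (he : G.ends e = (i, j) ∨ G.ends e = (j, i))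
    (h : G.GreedyChain (G.IsFreeTail m {i, κ} N) A L) (hj : ∀ Z ∈ L, j ∈ Z) :
    G.GreedyChain (G.IsFreeTail m {j, i, κ} (insert e N)) A L := by
  refine (h.isFreeTail_insert hj).congr_of_prec fun Z _ ↦ ?_
  rw [isFreeTail_insert_right, isFreeTail_insert_left he (mem_insert_self i {κ})]
  tauto

lemma isTerminalChain_symmDiff_two (hc : G.Connected)
    (he : G.ends e = (i, j) ∨ G.ends e = (j, i))
    (h : G.GreedyChain (G.IsFreeTail 2 {i, κ} N) A L)
    (h' : G.GreedyChain (G.IsFreeTail 2 {j, κ} N) A L') :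
    G.IsTerminalChain (symmDiff {Z | Z ∈ L} {Z | Z ∈ L'}) := by
  refine isTerminalChain_symmDiff_of_forall_mem he h h' ?_
  by_contra! ⟨⟨X, hX, hj⟩, Y, hY, hi⟩
  exact (IsFreeTail.mem_or_mem hc he (h.mem hX) (h'.mem hY) le_rfl le_rfl (by simp)).elim hj hi

lemma isTerminalChain_symmDiff_three_of_forall_mem (hc : G.Connected)
    (he : G.ends e = (i, j) ∨ G.ends e = (j, i))
    (hL : G.GreedyChain (G.IsFreeTail 2 {i, κ} ∅) ∅ L)
    (hL' : G.GreedyChain (G.IsFreeTail 2 {j, κ} ∅) ∅ L')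
    (hK : G.GreedyChain (G.IsFreeTail 3 {i, κ} (G.terminals {Z | Z ∈ L})) ∅ K)
    (hK' : G.GreedyChain (G.IsFreeTail 3 {j, κ} (G.terminals {Z | Z ∈ L'})) ∅ K')
    (hj : ∀ Z ∈ L, j ∈ Z) (hi : ∀ Z ∈ L', i ∈ Z) :
    G.IsTerminalChain (symmDiff {Z | Z ∈ K} {Z | Z ∈ K'}) := by
  obtain rfl : L = L' := by
    have h := hL.isFreeTail_insert hj
    rw [insert_comm] at h
    exact h.eq (hL'.isFreeTail_insert hi)
  refine isTerminalChain_symmDiff_of_forall_mem he hK hK' ?_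
  by_contra! ⟨⟨X, hX, hjX⟩, Y, hY, hiY⟩
  exact (IsFreeTail.mem_or_mem_three hc he (hL.not_isFreeTail_terminals hc)
    (hK.mem hX) (hK'.mem hY)).elim hjX hiY

lemma isTerminalChain_symmDiff_three_of_notMem (hc : G.Connected)
    (he : G.ends e = (i, j) ∨ G.ends e = (j, i))
    (hL : G.GreedyChain (G.IsFreeTail 2 {i, κ} ∅) ∅ L)
    (hL' : G.GreedyChain (G.IsFreeTail 2 {j, κ} ∅) ∅ L')
    (hK : G.GreedyChain (G.IsFreeTail 3 {i, κ} (G.terminals {Z | Z ∈ L})) ∅ K)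
    (hK' : G.GreedyChain (G.IsFreeTail 3 {j, κ} (G.terminals {Z | Z ∈ L'})) ∅ K')
    (hY : Y ∈ L') (hi : i ∉ Y) :
    G.IsTerminalChain (symmDiff {Z | Z ∈ K} {Z | Z ∈ K'}) := by
  have hjL : ∀ X ∈ L, j ∈ X := fun X hX ↦ (IsFreeTail.mem_or_mem hc he (hL.mem hX)
    (hL'.mem hY) le_rfl le_rfl (by simp)).resolve_right hi
  have hjK : ∀ X ∈ K, j ∈ X := fun X hX ↦ (IsFreeTail.mem_or_mem hc he (hK.mem hX)
    (hL'.mem hY) (by simp) le_rfl le_rfl).resolve_right hi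
  have heY : e ∈ G.Term Y := by
    have hj : j ∈ Y := (hL'.mem hY).subset (mem_insert_self j {κ})
    simp [mem_term_of_ends he, hi, hj]
  have hiK' : ∀ Z ∈ K', i ∈ Z := fun Z hZ ↦ by
    have hj : j ∈ Z := (hK'.mem hZ).subset (mem_insert_self j {κ})
    simpa [mem_term_of_ends he, hj] using (hK'.mem hZ).notMem_term e ⟨Y, hY, heY⟩
  obtain ⟨b, hb⟩ := hL'.exists_symmDiff_terminals_subset
    (hL.isFreeTail_and_notMem_term he.symm hjL) fun Z hZ ↦ hZ.isKTail.2
  have hKe := hK.isFreeTail_insert_insert he hjK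
  have hKe' := hK'.isFreeTail_insert_insert he.symm hiK'
  rw [insert_comm] at hKe
  refine isTerminalChain_symmDiff_of_symmDiff_subset (b := b) hKe hKe' fun x hx ↦ ?_
  have hbx := @hb x
  simp only [Set.mem_symmDiff, Set.mem_insert_iff, Set.mem_singleton_iff] at hx hbx ⊢
  tauto

lemma isTerminalChain_symmDiff_three (hc : G.Connected)
    (he : G.ends e = (i, j) ∨ G.ends e = (j, i))
    (hL : G.GreedyChain (G.IsFreeTail 2 {i, κ} ∅) ∅ L)
    (hL' : G.GreedyChain (G.IsFreeTail 2 {j, κ} ∅) ∅ L')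
    (hK : G.GreedyChain (G.IsFreeTail 3 {i, κ} (G.terminals {Z | Z ∈ L})) ∅ K)
    (hK' : G.GreedyChain (G.IsFreeTail 3 {j, κ} (G.terminals {Z | Z ∈ L'})) ∅ K') :
    G.IsTerminalChain (symmDiff {Z | Z ∈ K} {Z | Z ∈ K'}) := by
  by_cases hj : ∀ X ∈ L, j ∈ X
  · by_cases hi : ∀ Y ∈ L', i ∈ Y
    · exact isTerminalChain_symmDiff_three_of_forall_mem hc he hL hL' hK hK' hj hi
    · push Not at hi
      obtain ⟨Y, hY, hi⟩ := hi
      exact isTerminalChain_symmDiff_three_of_notMem hc he hL hL' hK hK' hY hi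
  · push Not at hj
    obtain ⟨X, hX, hj⟩ := hj
    rw [symmDiff_comm]
    exact isTerminalChain_symmDiff_three_of_notMem hc he.symm hL' hL hK' hK hX hj

end GreedyChain

end NestedSets

end NodalGraph

/-- Proposition 3.1: for `s ∈ {2,3}`, the symmetric difference
`T^s_{i,k|j,k}` is totally ordered by inclusion, and any two consecutive members
form a terminal pair. -/
theorem symmDiff_totally_ordered_and_consecutive_terminal
    (G : NodalGraph) (hconn : G.Connected) (i j k : G.V)
    (hij : i ≠ j) (hmeet : ∃ e, G.onComp e i ∧ G.onComp e j)
    (s : ℕ) (hs : s = 2 ∨ s = 3)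
    (M2i M2j M3i M3j : ℕ) (W2i W2j W3i W3j : ℕ → Finset G.V)
    (h2i : G.IsNested2 i k M2i W2i) (h2j : G.IsNested2 j k M2j W2j)
    (h3i : G.IsNested3 i k (G.chainSet M2i W2i) M3i W3i)
    (h3j : G.IsNested3 j k (G.chainSet M2j W2j) M3j W3j)
    (D : Set (Finset G.V))
    (hD : D = symmDiff (if s = 2 then G.chainSet M2i W2i else G.chainSet M3i W3i)
                       (if s = 2 then G.chainSet M2j W2j else G.chainSet M3j W3j)) :
    (∀ Wt ∈ D, ∀ Wt' ∈ D, Wt ⊆ Wt' ∨ Wt' ⊆ Wt) ∧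
    (∀ Wt ∈ D, ∀ Wt' ∈ D, Wt ⊂ Wt' →
      (¬ ∃ Wt'' ∈ D, Wt ⊂ Wt'' ∧ Wt'' ⊂ Wt') →
      (G.Term Wt ∩ G.Term Wt').Nonempty) := by
  obtain ⟨e, he⟩ := NodalGraph.exists_ends_of_onComp hij hmeet
  obtain ⟨L, hL, hgL⟩ := h2i.exists_greedyChain hconn
  obtain ⟨L', hL', hgL'⟩ := h2j.exists_greedyChain hconn
  rw [hL] at h3i
  rw [hL'] at h3j
  obtain ⟨K, hK, hgK⟩ := h3i.exists_greedyChain hconn hgL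
  obtain ⟨K', hK', hgK'⟩ := h3j.exists_greedyChain hconn hgL'
  rw [hL, hL', hK, hK'] at hD
  subst hD
  rcases hs with rfl | rfl
  · exact hgL.isTerminalChain_symmDiff_two hconn he hgL'
  · exact hgL.isTerminalChain_symmDiff_three hconn he hgL' hgK hgK'
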